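/- For every permutation σ ∈ S_n, the sum of lsg(i)+rsg(i) over all openers i of σ equals the sum of lsg(i)+rsg(i) over all closers i of σ, i.e., lsg(op)(σ)+rsg(op)(σ) = lsg(clos)(σ)+rsg(clos)(σ). -/

import Mathlib

/-!
An opener is exactly the minimum, and a closer exactly the maximum, of a run with at least two
elements (`openerB_iff`, `closerB_iff`). Attach to each such run `r` the interval `[m r, M r]`
from its minimum to its maximum. A run has elements on both sides of `v` iff `m r < v < M r`, and
the run of an opener or closer `v` never does, so `lsg + rsg` at `v` counts all the runs whose
open interval contains `v` (`lsgAt_add_rsgAt`).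

Thus the opener sum counts the pairs `(r, s)` with `m s < m r < M s`, and the closer sum the pairs
with `m s < M r < M s`. Distinct intervals share no endpoint. A nested pair `m s < m r < M r < M s`
is counted once by each sum, and a crossing pair `m s < m r < M s < M r` is counted as `(r, s)` by
the first and as `(s, r)` by the second, so swapping the crossing pairs is a bijection
(`card_left_eq_card_right`).
-/

open Finset

namespace SS

variable {n : ℕ}

/-- `descB σ j = true` iff there is a descent between positions `j` and `j+1`
in the word `σ(1)σ(2)⋯σ(n)`. -/
def descB (σ : Equiv.Perm (Fin n)) (j : ℕ) : Bool :=
  if h : j + 1 < n then decide ((σ ⟨j+1, h⟩) < σ ⟨j, Nat.lt_of_succ_lt h⟩) else false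

/-- The index of the maximal increasing run containing position `p`. -/
def runIdx (σ : Equiv.Perm (Fin n)) (p : ℕ) : ℕ :=
  ((Finset.range p).filter (fun j => descB σ j = true)).card

/-- The index of the run containing the value `v`. -/
def runOf (σ : Equiv.Perm (Fin n)) (v : Fin n) : ℕ := runIdx σ (σ.symm v).val

/-- The number of maximal increasing runs of `σ`. -/
def runCount (σ : Equiv.Perm (Fin n)) : ℕ :=
  if n = 0 then 0 else runIdx σ n + 1

/-- `lsgAt σ v` : number of runs strictly to the left of (the run of) `v`
containing both an element smaller than `v` and an element greater than `v`. -/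
def lsgAt (σ : Equiv.Perm (Fin n)) (v : Fin n) : ℕ :=
  ((Finset.range (runCount σ)).filter (fun r => r < runOf σ v ∧
      (∃ a : Fin n, runOf σ a = r ∧ a < v) ∧ (∃ b : Fin n, runOf σ b = r ∧ v < b))).card

/-- `rsgAt σ v` : number of runs strictly to the right of `v`
containing both an element smaller than `v` and an element greater than `v`. -/
def rsgAt (σ : Equiv.Perm (Fin n)) (v : Fin n) : ℕ :=
  ((Finset.range (runCount σ)).filter (fun r => runOf σ v < r ∧
      (∃ a : Fin n, runOf σ a = r ∧ a < v) ∧ (∃ b : Fin n, runOf σ b = r ∧ v < b))).card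

def lsg (σ : Equiv.Perm (Fin n)) : ℕ := ∑ v : Fin n, lsgAt σ v
def rsg (σ : Equiv.Perm (Fin n)) : ℕ := ∑ v : Fin n, rsgAt σ v

/-- position `p` begins a maximal increasing run. -/
def startsB (σ : Equiv.Perm (Fin n)) (p : ℕ) : Bool := p == 0 || descB σ (p - 1)

/-- position `p` ends a maximal increasing run. -/
def endsB (σ : Equiv.Perm (Fin n)) (p : ℕ) : Bool := p + 1 == n || descB σ p

def openerB (σ : Equiv.Perm (Fin n)) (v : Fin n) : Bool :=
  startsB σ (σ.symm v).val && !endsB σ (σ.symm v).val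
def closerB (σ : Equiv.Perm (Fin n)) (v : Fin n) : Bool :=
  endsB σ (σ.symm v).val && !startsB σ (σ.symm v).val
def singB (σ : Equiv.Perm (Fin n)) (v : Fin n) : Bool :=
  startsB σ (σ.symm v).val && endsB σ (σ.symm v).val
def contB (σ : Equiv.Perm (Fin n)) (v : Fin n) : Bool :=
  !startsB σ (σ.symm v).val && !endsB σ (σ.symm v).val

def lsgOp (σ : Equiv.Perm (Fin n)) : ℕ :=
  ∑ v ∈ univ.filter (fun v : Fin n => openerB σ v = true), lsgAt σ v
def rsgOp (σ : Equiv.Perm (Fin n)) : ℕ :=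
  ∑ v ∈ univ.filter (fun v : Fin n => openerB σ v = true), rsgAt σ v
def lsgClos (σ : Equiv.Perm (Fin n)) : ℕ :=
  ∑ v ∈ univ.filter (fun v : Fin n => closerB σ v = true), lsgAt σ v
def rsgClos (σ : Equiv.Perm (Fin n)) : ℕ :=
  ∑ v ∈ univ.filter (fun v : Fin n => closerB σ v = true), rsgAt σ v
def lsgSing (σ : Equiv.Perm (Fin n)) : ℕ :=
  ∑ v ∈ univ.filter (fun v : Fin n => singB σ v = true), lsgAt σ v
def rsgSing (σ : Equiv.Perm (Fin n)) : ℕ :=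
  ∑ v ∈ univ.filter (fun v : Fin n => singB σ v = true), rsgAt σ v
def lsgCont (σ : Equiv.Perm (Fin n)) : ℕ :=
  ∑ v ∈ univ.filter (fun v : Fin n => contB σ v = true), lsgAt σ v
def rsgCont (σ : Equiv.Perm (Fin n)) : ℕ :=
  ∑ v ∈ univ.filter (fun v : Fin n => contB σ v = true), rsgAt σ v

/-- `[m]_q = 1 + q + ⋯ + q^{m-1}`. -/
def qint {R : Type*} [CommRing R] (q : R) (m : ℕ) : R := ∑ i ∈ Finset.range m, q ^ i

/-- `[n]_q! = [1]_q [2]_q ⋯ [n]_q`. -/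
def qfact {R : Type*} [CommRing R] (q : R) (n : ℕ) : R := ∏ m ∈ Finset.range n, qint q (m+1)

/-- `moment b lam l h` : sum of the weights of all weighted Motzkin paths with `l` steps
starting at height `h` and ending at height `0`, where up steps have weight `1`,
a level step at height `k` has weight `b k`, and a down step from height `k`
has weight `lam k`.  The `n`th moment of the corresponding monic orthogonal
polynomial sequence is `moment b lam n 0`. -/
def moment {R : Type*} [CommRing R] (b lam : ℕ → R) : ℕ → ℕ → R
  | 0, h => if h = 0 then 1 else 0
  | (l+1), h => moment b lam l (h+1) + b h * moment b lam l h +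
      (if h = 0 then 0 else lam h * moment b lam l (h-1))

end SS

namespace SS

variable {n : ℕ}

lemma runIdx_succ (σ : Equiv.Perm (Fin n)) (p : ℕ) :
    runIdx σ (p + 1) = runIdx σ p + if descB σ p = true then 1 else 0 := by
  unfold runIdx
  rw [Finset.range_add_one, Finset.filter_insert]
  split_ifs <;> simp

lemma runIdx_mono (σ : Equiv.Perm (Fin n)) : Monotone (runIdx σ) :=
  monotone_nat_of_le_succ fun p => by rw [runIdx_succ]; omega

/-- Within a run the word increases. -/
lemma lt_of_runIdx_eq (σ : Equiv.Perm (Fin n)) (p : ℕ) (hp : p < n) :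
    ∀ q, ∀ hq : q < n, p < q → runIdx σ p = runIdx σ q → σ ⟨p, hp⟩ < σ ⟨q, hq⟩ := by
  intro q
  induction q with
  | zero => intro _ h; omega
  | succ q ih =>
    intro hq hpq he
    have h1 := runIdx_mono σ (show p ≤ q by omega)
    have h2 := runIdx_succ σ q
    have hd : ¬ descB σ q = true := by
      intro h; rw [if_pos h] at h2; omega
    rw [if_neg hd] at h2
    have hlt : σ ⟨q, by omega⟩ < σ ⟨q + 1, hq⟩ := by
      simp only [descB, hq, dite_true, decide_eq_true_eq, not_lt] at hd
      refine lt_of_le_of_ne hd fun h => ?_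
      have := congrArg Fin.val (σ.injective h)
      simp at this
    rcases Nat.lt_or_ge p q with h | h
    · exact (ih (by omega) h (by omega)).trans hlt
    · obtain rfl : p = q := by omega
      exact hlt

lemma lt_of_runOf_eq (σ : Equiv.Perm (Fin n)) {a b : Fin n} (h : runOf σ a = runOf σ b)
    (hp : (σ.symm a).val < (σ.symm b).val) : a < b := by
  simpa using lt_of_runIdx_eq σ _ (σ.symm a).2 _ (σ.symm b).2 hp h

lemma pos_lt_of_runOf_eq (σ : Equiv.Perm (Fin n)) {a b : Fin n} (h : runOf σ a = runOf σ b)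
    (hab : a < b) : (σ.symm a).val < (σ.symm b).val := by
  rcases lt_trichotomy (σ.symm a).val (σ.symm b).val with h1 | h1 | h1
  · exact h1
  · exact absurd (σ.symm.injective (Fin.ext h1)) hab.ne
  · exact absurd (lt_of_runOf_eq σ h.symm h1) hab.asymm

/-- Starting a run means being its minimum. -/
lemma startsB_iff (σ : Equiv.Perm (Fin n)) (v : Fin n) :
    startsB σ (σ.symm v).val = true ↔ ∀ a, runOf σ a = runOf σ v → v ≤ a := by
  simp only [startsB, Bool.or_eq_true, beq_iff_eq]
  constructor
  · intro h a ha
    by_contra! hav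
    have hp := pos_lt_of_runOf_eq σ ha hav
    rcases h with h | h
    · omega
    · have h1 := runIdx_mono σ (show (σ.symm a).val ≤ (σ.symm v).val - 1 by omega)
      have h2 := runIdx_succ σ ((σ.symm v).val - 1)
      rw [if_pos h, show (σ.symm v).val - 1 + 1 = (σ.symm v).val by omega] at h2
      unfold runOf at ha
      omega
  · intro h
    by_contra! hc
    obtain ⟨h0, hd⟩ := hc
    have hlt := (σ.symm v).2
    have h2 := runIdx_succ σ ((σ.symm v).val - 1)
    rw [if_neg hd, show (σ.symm v).val - 1 + 1 = (σ.symm v).val by omega] at h2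
    have hr : runOf σ (σ ⟨(σ.symm v).val - 1, by omega⟩) = runOf σ v := by
      simp [runOf, h2]
    refine absurd (h _ hr) (not_le.2 (lt_of_runOf_eq σ hr ?_))
    simp only [Equiv.symm_apply_apply]
    omega

/-- Ending a run means being its maximum. -/
lemma endsB_iff (σ : Equiv.Perm (Fin n)) (v : Fin n) :
    endsB σ (σ.symm v).val = true ↔ ∀ a, runOf σ a = runOf σ v → a ≤ v := by
  simp only [endsB, Bool.or_eq_true, beq_iff_eq]
  have h2 := runIdx_succ σ (σ.symm v).val
  constructor
  · intro h a ha
    by_contra! hav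
    have hp := pos_lt_of_runOf_eq σ ha.symm hav
    have hlt := (σ.symm a).2
    rcases h with h | h
    · omega
    · have h1 := runIdx_mono σ (show (σ.symm v).val + 1 ≤ (σ.symm a).val by omega)
      rw [if_pos h] at h2
      unfold runOf at ha
      omega
  · intro h
    by_contra! hc
    obtain ⟨h0, hd⟩ := hc
    have hlt := (σ.symm v).2
    rw [if_neg hd] at h2
    have hr : runOf σ (σ ⟨(σ.symm v).val + 1, by omega⟩) = runOf σ v := by
      simp [runOf, h2]
    refine absurd (h _ hr) (not_le.2 (lt_of_runOf_eq σ hr.symm ?_))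
    simp

lemma openerB_iff (σ : Equiv.Perm (Fin n)) (v : Fin n) :
    openerB σ v = true ↔
      (∀ a, runOf σ a = runOf σ v → v ≤ a) ∧ ∃ a, runOf σ a = runOf σ v ∧ v < a := by
  rw [openerB, Bool.and_eq_true, startsB_iff, Bool.not_eq_true', ← Bool.not_eq_true, endsB_iff]
  push Not
  rfl

lemma closerB_iff (σ : Equiv.Perm (Fin n)) (v : Fin n) :
    closerB σ v = true ↔
      (∀ a, runOf σ a = runOf σ v → a ≤ v) ∧ ∃ a, runOf σ a = runOf σ v ∧ a < v := by
  rw [closerB, Bool.and_eq_true, endsB_iff, Bool.not_eq_true', ← Bool.not_eq_true, startsB_iff]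
  push Not
  rfl

lemma runOf_lt_runCount (σ : Equiv.Perm (Fin n)) (v : Fin n) : runOf σ v < runCount σ := by
  have hv := v.2
  rw [runCount, if_neg (by omega)]
  exact Nat.lt_succ_of_le (runIdx_mono σ (σ.symm v).2.le)

/-- The indices of the runs with at least two elements. -/
def longRuns (σ : Equiv.Perm (Fin n)) : Finset ℕ :=
  (univ.filter fun v : Fin n => ∃ a, runOf σ a = runOf σ v ∧ v < a).image (runOf σ)

lemma mem_longRuns (σ : Equiv.Perm (Fin n)) (r : ℕ) :
    r ∈ longRuns σ ↔ ∃ a b : Fin n, runOf σ a = r ∧ runOf σ b = r ∧ a < b := by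
  simp only [longRuns, mem_image, mem_filter, mem_univ, true_and]
  constructor
  · rintro ⟨a, ⟨b, hb, hab⟩, rfl⟩
    exact ⟨a, b, rfl, hb, hab⟩
  · rintro ⟨a, b, rfl, hb, hab⟩
    exact ⟨a, ⟨b, hb, hab⟩, rfl⟩

lemma exists_minMax (σ : Equiv.Perm (Fin n)) (r : ℕ) (hr : r ∈ longRuns σ) :
    ∃ x : Fin n × Fin n, (runOf σ x.1 = r ∧ runOf σ x.2 = r) ∧
      ∀ c, runOf σ c = r → x.1 ≤ c ∧ c ≤ x.2 := by
  obtain ⟨a, b, ha, -, -⟩ := (mem_longRuns σ r).1 hr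
  have hne : (univ.filter fun c : Fin n => runOf σ c = r).Nonempty := ⟨a, by simp [ha]⟩
  refine ⟨(Finset.min' _ hne, Finset.max' _ hne), ⟨?_, ?_⟩, fun c hc => ⟨?_, ?_⟩⟩
  · exact (mem_filter.1 (Finset.min'_mem _ hne)).2
  · exact (mem_filter.1 (Finset.max'_mem _ hne)).2
  · exact Finset.min'_le _ _ (by simp [hc])
  · exact Finset.le_max' _ _ (by simp [hc])

/-- If `v` is an extremum of its run, then that run does not straddle `v`, so nothing is lost in
counting the straddling runs to the left and to the right of `v` together. -/
lemma lsgAt_add_rsgAt (σ : Equiv.Perm (Fin n)) (m M : ℕ → Fin n)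
    (hm : ∀ r ∈ longRuns σ, runOf σ (m r) = r) (hM : ∀ r ∈ longRuns σ, runOf σ (M r) = r)
    (hle : ∀ r ∈ longRuns σ, ∀ c, runOf σ c = r → m r ≤ c ∧ c ≤ M r)
    (v : Fin n) (hv : v = m (runOf σ v) ∨ v = M (runOf σ v)) :
    lsgAt σ v + rsgAt σ v = #{s ∈ longRuns σ | m s < v ∧ v < M s} := by
  rw [lsgAt, rsgAt, ← Finset.card_union_of_disjoint]
  · congr 1
    ext s
    simp only [mem_union, mem_filter, mem_range]
    constructor
    · intro h
      have h' : (∃ a : Fin n, runOf σ a = s ∧ a < v) ∧ (∃ b : Fin n, runOf σ b = s ∧ v < b) := by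
        rcases h with h | h <;> exact h.2.2
      obtain ⟨⟨a, ha, hav⟩, b, hb, hvb⟩ := h'
      have hs : s ∈ longRuns σ := (mem_longRuns σ s).2 ⟨a, b, ha, hb, hav.trans hvb⟩
      exact ⟨hs, (hle s hs a ha).1.trans_lt hav, hvb.trans_le (hle s hs b hb).2⟩
    · rintro ⟨hs, h1, h2⟩
      have hcount : s < runCount σ := hm s hs ▸ runOf_lt_runCount σ (m s)
      have hne : s ≠ runOf σ v := by
        rintro rfl
        rcases hv with h | h
        · exact h1.ne' h
        · exact h2.ne h
      have hst : (∃ a : Fin n, runOf σ a = s ∧ a < v) ∧ (∃ b : Fin n, runOf σ b = s ∧ v < b) :=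
        ⟨⟨m s, hm s hs, h1⟩, M s, hM s hs, h2⟩
      rcases lt_or_gt_of_ne hne with h | h
      · exact Or.inl ⟨hcount, h, hst⟩
      · exact Or.inr ⟨hcount, h, hst⟩
  · rw [Finset.disjoint_left]
    intro s h1 h2
    exact (mem_filter.1 h1).2.1.asymm (mem_filter.1 h2).2.1

/-- In a finite family of intervals in which no two left endpoints, and no two right endpoints,
coincide, as many left endpoints as right endpoints lie inside other intervals, counted with
multiplicity. -/
lemma card_left_eq_card_right {α : Type*} [LinearOrder α] (T : Finset ℕ) (m M : ℕ → α)
    (hmM : ∀ r ∈ T, m r < M r) (hm : Set.InjOn m T) (hM : Set.InjOn M T) :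
    ∑ r ∈ T, #{s ∈ T | m s < m r ∧ m r < M s} = ∑ r ∈ T, #{s ∈ T | m s < M r ∧ M r < M s} := by
  have key : ∀ f : ℕ → α, ∑ r ∈ T, #{s ∈ T | m s < f r ∧ f r < M s} =
      #{x ∈ T ×ˢ T | m x.2 < f x.1 ∧ f x.1 < M x.2} := by
    intro f
    simp only [Finset.card_filter]
    rw [Finset.sum_product]
  rw [key, key]
  -- Nested pairs are kept, crossing pairs are swapped.
  refine Finset.card_nbij' (fun x => if M x.1 < M x.2 then x else x.swap)
    (fun x => if m x.2 < m x.1 then x else x.swap) ?_ ?_ ?_ ?_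
  all_goals
    rintro ⟨r, s⟩ hx
    simp only [coe_filter, mem_product, Set.mem_ofPred_eq] at hx
    obtain ⟨⟨hr, hs⟩, h1, h2⟩ := hx
    have hr' := hmM r hr
    have hs' := hmM s hs
    have im := fun h : m r = m s => hm hr hs h
    have iM := fun h : M r = M s => hM hr hs h
    simp only [coe_filter, mem_product, Set.mem_ofPred_eq]
    grind

end SS
open SS in
/-- `lsg(op)(σ) + rsg(op)(σ) = lsg(clos)(σ) + rsg(clos)(σ)`. -/
theorem stmt1 (n : ℕ) (σ : Equiv.Perm (Fin n)) :
    lsgOp σ + rsgOp σ = lsgClos σ + rsgClos σ := by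
  rcases Nat.eq_zero_or_pos n with rfl | hn
  · simp [lsgOp, rsgOp, lsgClos, rsgClos]
  -- `m r` and `M r` are the minimum and the maximum of a long run `r`, and arbitrary otherwise.
  have : Nonempty (Fin n) := ⟨⟨0, hn⟩⟩
  have hex : ∀ r, ∃ x : Fin n × Fin n, r ∈ longRuns σ → (runOf σ x.1 = r ∧ runOf σ x.2 = r) ∧
      ∀ c, runOf σ c = r → x.1 ≤ c ∧ c ≤ x.2 := by
    intro r
    by_cases hr : r ∈ longRuns σ
    · obtain ⟨x, hx⟩ := exists_minMax σ r hr
      exact ⟨x, fun _ => hx⟩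
    · exact ⟨Classical.arbitrary _, fun h => absurd h hr⟩
  choose x hx using hex
  obtain ⟨m, hmdef⟩ : ∃ m : ℕ → Fin n, ∀ r, m r = (x r).1 := ⟨_, fun _ => rfl⟩
  obtain ⟨M, hMdef⟩ : ∃ M : ℕ → Fin n, ∀ r, M r = (x r).2 := ⟨_, fun _ => rfl⟩
  simp only [← hmdef, ← hMdef] at hx
  have hm : ∀ r ∈ longRuns σ, runOf σ (m r) = r := fun r hr => (hx r hr).1.1
  have hM : ∀ r ∈ longRuns σ, runOf σ (M r) = r := fun r hr => (hx r hr).1.2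
  have hle : ∀ r ∈ longRuns σ, ∀ c, runOf σ c = r → m r ≤ c ∧ c ≤ M r :=
    fun r hr => (hx r hr).2
  have hlt : ∀ r ∈ longRuns σ, m r < M r := by
    intro r hr
    obtain ⟨a, b, ha, hb, hab⟩ := (mem_longRuns σ r).1 hr
    exact ((hle r hr a ha).1.trans_lt hab).trans_le (hle r hr b hb).2
  have hop : ∑ v ∈ univ.filter (fun v : Fin n => openerB σ v = true), (lsgAt σ v + rsgAt σ v) =
      ∑ r ∈ longRuns σ, #{s ∈ longRuns σ | m s < m r ∧ m r < M s} := by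
    have hv : ∀ v : Fin n, openerB σ v = true → runOf σ v ∈ longRuns σ ∧ m (runOf σ v) = v := by
      intro v hv
      obtain ⟨h1, a, ha, hva⟩ := (openerB_iff σ v).1 hv
      have hr : runOf σ v ∈ longRuns σ := (mem_longRuns σ _).2 ⟨v, a, rfl, ha, hva⟩
      exact ⟨hr, le_antisymm (hle _ hr v rfl).1 (h1 _ (hm _ hr))⟩
    refine Finset.sum_nbij' (runOf σ) m ?_ ?_ ?_ hm ?_
    · intro v h
      exact (hv v (mem_filter.1 h).2).1
    · intro r hr
      simp only [mem_filter, mem_univ, true_and, openerB_iff, hm r hr]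
      exact ⟨fun a ha => (hle r hr a ha).1, M r, hM r hr, hlt r hr⟩
    · intro v h
      exact (hv v (mem_filter.1 h).2).2
    · intro v h
      have h' := (hv v (mem_filter.1 h).2).2
      rw [lsgAt_add_rsgAt σ m M hm hM hle v (Or.inl h'.symm), h']
  have hcl : ∑ v ∈ univ.filter (fun v : Fin n => closerB σ v = true), (lsgAt σ v + rsgAt σ v) =
      ∑ r ∈ longRuns σ, #{s ∈ longRuns σ | m s < M r ∧ M r < M s} := by
    have hv : ∀ v : Fin n, closerB σ v = true → runOf σ v ∈ longRuns σ ∧ M (runOf σ v) = v := by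
      intro v hv
      obtain ⟨h1, a, ha, hva⟩ := (closerB_iff σ v).1 hv
      have hr : runOf σ v ∈ longRuns σ := (mem_longRuns σ _).2 ⟨a, v, ha, rfl, hva⟩
      exact ⟨hr, le_antisymm (h1 _ (hM _ hr)) (hle _ hr v rfl).2⟩
    refine Finset.sum_nbij' (runOf σ) M ?_ ?_ ?_ hM ?_
    · intro v h
      exact (hv v (mem_filter.1 h).2).1
    · intro r hr
      simp only [mem_filter, mem_univ, true_and, closerB_iff, hM r hr]
      exact ⟨fun a ha => (hle r hr a ha).2, m r, hm r hr, hlt r hr⟩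
    · intro v h
      exact (hv v (mem_filter.1 h).2).2
    · intro v h
      have h' := (hv v (mem_filter.1 h).2).2
      rw [lsgAt_add_rsgAt σ m M hm hM hle v (Or.inr h'.symm), h']
  rw [lsgOp, rsgOp, lsgClos, rsgClos, ← Finset.sum_add_distrib, ← Finset.sum_add_distrib, hop, hcl]
  refine card_left_eq_card_right _ m M hlt ?_ ?_
  · intro r hr s hs h
    rw [← hm r hr, h, hm s hs]
  · intro r hr s hs h
    rw [← hM r hr, h, hM s hs]
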